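/- arXiv:1401.5037 — 2 statements merged into one kernel-verified Lean document; each statement's English description precedes it below -/
import Mathlib

section
/- Let m ≥ 3 and let Ω = {B ⊂ [m] : 1 ≤ |B| ≤ m−2}. The singleton partition S satisfies Δ(S) < Δ(P) for every partition P of [m] with |P| ≥ 2 and P ≠ S if and only if Δ(S) < Δ(P_B) for every B ∈ Ω. (Proposition 1(b).) -/
open MeasureTheory Finset

/-- Shannon entropy (natural log) of a random variable with values in a finite set. -/
noncomputable def shannonEntropy {Ω : Type*} [MeasurableSpace Ω] (μ : Measure Ω)
    {S : Type*} [Fintype S] (Y : Ω → S) : ℝ :=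
  ∑ s : S, Real.negMulLog (μ (Y ⁻¹' {s})).toReal

/-- `HX μ X A` is the Shannon entropy of the tuple `X_A = (X_i : i ∈ A)`. -/
noncomputable def HX {m : ℕ} {Ω : Type*} [MeasurableSpace Ω] (μ : Measure Ω)
    {𝒳 : Fin m → Type*} [∀ i, Fintype (𝒳 i)] (X : ∀ i, Ω → 𝒳 i)
    (A : Finset (Fin m)) : ℝ :=
  shannonEntropy μ (fun ω => fun i : A => X i ω)

/-- Conditional entropy `H(X_A | X_B)`. -/
noncomputable def condEnt {m : ℕ} {Ω : Type*} [MeasurableSpace Ω] (μ : Measure Ω)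
    {𝒳 : Fin m → Type*} [∀ i, Fintype (𝒳 i)] (X : ∀ i, Ω → 𝒳 i)
    (A B : Finset (Fin m)) : ℝ :=
  HX μ X (A ∪ B) - HX μ X B

/-- `P` is a partition of `[m]` into nonempty cells. -/
def IsPartition {m : ℕ} (P : Finset (Finset (Fin m))) : Prop :=
  (∀ A ∈ P, A.Nonempty) ∧ ∀ i : Fin m, ∃! A, A ∈ P ∧ i ∈ A

/-- The singleton partition `S = {{1},…,{m}}` of `[m]`. -/
def sPart (m : ℕ) : Finset (Finset (Fin m)) := Finset.univ.image fun i => {i}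

/-- `Δ(P) = (1/(|P|−1))·[Σ_{A∈P} H(X_A) − H(X_{[m]})]`. -/
noncomputable def ΔP {m : ℕ} {Ω : Type*} [MeasurableSpace Ω] (μ : Measure Ω)
    {𝒳 : Fin m → Type*} [∀ i, Fintype (𝒳 i)] (X : ∀ i, Ω → 𝒳 i)
    (P : Finset (Finset (Fin m))) : ℝ :=
  (1 / ((P.card : ℝ) - 1)) * (∑ A ∈ P, HX μ X A - HX μ X Finset.univ)

/-- For nonempty `B ⊊ [m]`, the partition `P_B` consisting of the cell `Bᶜ`
together with the singleton cells `{b}`, `b ∈ B`. -/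
def partB {m : ℕ} (B : Finset (Fin m)) : Finset (Finset (Fin m)) :=
  insert Bᶜ (B.image fun b => ({b} : Finset (Fin m)))

/-! For a scalar `t` give a cell `A` the weight `e_t(A) = (|A| - 1) t - (∑_{i ∈ A} H{i} - H(A))`,
which vanishes on singletons. For every partition `P` of `s`,
`(|P| - 1) (Δ(P) - t) = ∑_{A ∈ P} e_t(A) - e_t(s)`.
Applied to `P = S` and `t = Δ(S)` this gives `e_t(s) = 0`, so for this `t` the sign of `Δ(P) - Δ(S)`
is that of `∑_{A ∈ P} e_t(A)`. For `P_B` the only summand that can be nonzero is `e_t(Bᶜ)`; hence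
the inequalities `Δ(S) < Δ(P_B)` say that every proper subset with at least two elements has
positive weight, which makes the sum positive for every `P ≠ S`. -/

section Partitions

variable {α : Type*} [DecidableEq α] {s B : Finset α}

/-- The partition `P_B` of `s`: the singletons of `B` together with the cell `s \ B`
(absent when `B = s`). -/
def singletonsAndRest (hB : B ⊆ s) : Finpartition s :=
  (⊥ : Finpartition B).extendOfLE hB

theorem parts_singletonsAndRest (hB : B ⊂ s) :
    (singletonsAndRest hB.subset).parts = insert (s \ B) (⊥ : Finpartition B).parts :=
  Finpartition.parts_extendOfLE_of_lt _ hB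

theorem sum_parts_singletonsAndRest {M : Type*} [AddCommMonoid M] (hB : B ⊂ s)
    (f : Finset α → M) :
    ∑ A ∈ (singletonsAndRest hB.subset).parts, f A = f (s \ B) + ∑ b ∈ B, f {b} := by
  have rest_notMem : s \ B ∉ (⊥ : Finpartition B).parts := by
    rw [Finpartition.mem_bot_iff]
    rintro ⟨b, hb, hrest⟩
    exact (mem_sdiff.1 (hrest ▸ mem_singleton_self b)).2 hb
  rw [parts_singletonsAndRest hB, sum_insert rest_notMem, Finpartition.parts_bot, sum_map]
  rfl

theorem card_parts_singletonsAndRest (hB : B ⊂ s) :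
    #(singletonsAndRest hB.subset).parts = #B + 1 := by
  rw [card_eq_sum_ones, sum_parts_singletonsAndRest hB, ← card_eq_sum_ones, add_comm]

theorem singletonsAndRest_ne_bot (hB : B ⊆ s) (hrest : 1 < #(s \ B)) :
    singletonsAndRest hB ≠ ⊥ := by
  intro heq
  have hBs : B ⊂ s := hB.ssubset_of_ne fun h => by simp [h] at hrest
  have rest_mem : s \ B ∈ (⊥ : Finpartition s).parts := by
    rw [← heq, parts_singletonsAndRest hBs]
    exact mem_insert_self _ _
  obtain ⟨b, -, hb⟩ := Finpartition.mem_bot_iff.1 rest_mem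
  simp [← hb] at hrest

theorem exists_one_lt_card_of_ne_bot {P : Finpartition s} (hP : P ≠ ⊥) :
    ∃ A ∈ P.parts, 1 < #A := by
  by_contra! hcard
  refine hP (le_bot_iff.1 fun A hA => ⟨A, ?_, le_rfl⟩)
  obtain ⟨a, rfl⟩ := card_eq_one.1
    ((hcard A hA).antisymm (card_pos.2 (P.nonempty_of_mem_parts hA)))
  exact Finpartition.mem_bot_iff.2 ⟨a, P.subset hA (mem_singleton_self a), rfl⟩

theorem ssubset_of_mem_parts {P : Finpartition s} (hP : 1 < #P.parts) {A : Finset α}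
    (hA : A ∈ P.parts) : A ⊂ s := by
  refine (P.subset hA).ssubset_of_ne ?_
  rintro rfl
  obtain ⟨C, hC, hCA⟩ := exists_mem_ne hP A
  obtain ⟨i, hi⟩ := P.nonempty_of_mem_parts hC
  exact hCA (P.eq_of_mem_parts hC hA hi (P.subset hC hi))

end Partitions

section CellExcess

variable {α R : Type*} [CommRing R] (H : Finset α → R) (t : R)

/-- The weight `e_t(A)`: by how much `(|A| - 1) t` exceeds `∑_{i ∈ A} H{i} - H(A)`. It turns
comparisons of `Δ(P)` with `t` into a sum over the cells of `P`. -/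
def cellExcess (A : Finset α) : R :=
  (#A - 1) * t - (∑ i ∈ A, H {i} - H A)

theorem cellExcess_singleton (i : α) : cellExcess H t {i} = 0 := by
  simp [cellExcess]

theorem sum_cellExcess_sub [DecidableEq α] {s : Finset α} (P : Finpartition s) :
    ∑ A ∈ P.parts, cellExcess H t A - cellExcess H t s =
      ∑ A ∈ P.parts, H A - H s - (#P.parts - 1) * t := by
  have sum_singletons : ∑ A ∈ P.parts, ∑ i ∈ A, H {i} = ∑ i ∈ s, H {i} := by
    conv_rhs => rw [← P.biUnion_parts, sum_biUnion P.disjoint]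
    rfl
  have sum_card : ∑ A ∈ P.parts, (#A : R) = #s := by
    rw [← Nat.cast_sum, P.sum_card_parts]
  simp only [cellExcess, sum_sub_distrib, ← sum_mul, sum_singletons, sum_card, sum_const,
    nsmul_one]
  ring

end CellExcess

section PartitionGap

variable {α 𝕜 : Type*} [DecidableEq α] [Field 𝕜] {s : Finset α}

/-- `Δ(P)` for an arbitrary set function `H` in place of the entropy `A ↦ H(X_A)`; when
`|P| = 1` the factor is `1 / 0 = 0`. -/
def partitionGap (H : Finset α → 𝕜) (P : Finpartition s) : 𝕜 :=
  (1 / (#P.parts - 1)) * (∑ A ∈ P.parts, H A - H s)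

theorem card_sub_one_mul_partitionGap_sub [CharZero 𝕜] (H : Finset α → 𝕜) (t : 𝕜)
    {P : Finpartition s} (hP : 1 < #P.parts) :
    (#P.parts - 1) * (partitionGap H P - t) =
      ∑ A ∈ P.parts, cellExcess H t A - cellExcess H t s := by
  have card_sub_one_ne : (#P.parts - 1 : 𝕜) ≠ 0 :=
    sub_ne_zero.2 (Nat.cast_ne_one.2 hP.ne')
  rw [sum_cellExcess_sub, partitionGap, mul_sub, ← mul_assoc, mul_one_div_cancel card_sub_one_ne,
    one_mul]

theorem cellExcess_partitionGap_bot [CharZero 𝕜] (H : Finset α → 𝕜) (hs : 1 < #s) :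
    cellExcess H (partitionGap H (⊥ : Finpartition s)) s = 0 := by
  have identity := card_sub_one_mul_partitionGap_sub H (partitionGap H (⊥ : Finpartition s))
    (P := ⊥) (by rwa [Finpartition.card_bot])
  have bot_sum_eq_zero : ∑ A ∈ (⊥ : Finpartition s).parts,
      cellExcess H (partitionGap H (⊥ : Finpartition s)) A = 0 :=
    (sum_map ..).trans (sum_eq_zero fun i _ => cellExcess_singleton H _ i)
  rw [sub_self, mul_zero, bot_sum_eq_zero, zero_sub] at identity
  exact neg_eq_zero.1 identity.symm

variable [LinearOrder 𝕜] [IsStrictOrderedRing 𝕜]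

theorem partitionGap_bot_lt_iff (H : Finset α → 𝕜) {P : Finpartition s} (hP : 1 < #P.parts) :
    partitionGap H (⊥ : Finpartition s) < partitionGap H P ↔
      0 < ∑ A ∈ P.parts, cellExcess H (partitionGap H (⊥ : Finpartition s)) A := by
  have card_sub_one_pos : (0 : 𝕜) < #P.parts - 1 := sub_pos.2 (Nat.one_lt_cast.2 hP)
  rw [← sub_pos, ← mul_pos_iff_of_pos_left card_sub_one_pos,
    card_sub_one_mul_partitionGap_sub H _ hP,
    cellExcess_partitionGap_bot H (hP.trans_le P.card_parts_le_card), sub_zero]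

theorem partitionGap_bot_lt_singletonsAndRest_iff (H : Finset α → 𝕜) {B : Finset α}
    (hB : B ⊂ s) (hne : B.Nonempty) :
    partitionGap H (⊥ : Finpartition s) < partitionGap H (singletonsAndRest hB.subset) ↔
      0 < cellExcess H (partitionGap H (⊥ : Finpartition s)) (s \ B) := by
  have one_lt_card : 1 < #(singletonsAndRest hB.subset).parts := by
    rw [card_parts_singletonsAndRest hB]
    exact Nat.lt_add_of_pos_left hne.card_pos
  simp only [partitionGap_bot_lt_iff H one_lt_card, sum_parts_singletonsAndRest hB,
    cellExcess_singleton, sum_const_zero, add_zero]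

theorem partitionGap_bot_lt_of_cellExcess_pos {H : Finset α → 𝕜} {P : Finpartition s}
    (hpos : ∀ A ∈ P.parts, 1 < #A → 0 < cellExcess H (partitionGap H (⊥ : Finpartition s)) A)
    (hcard : 1 < #P.parts) (hP : P ≠ ⊥) :
    partitionGap H (⊥ : Finpartition s) < partitionGap H P := by
  rw [partitionGap_bot_lt_iff H hcard]
  obtain ⟨A, hA, hA_card⟩ := exists_one_lt_card_of_ne_bot hP
  refine sum_pos' (fun C hC => ?_) ⟨A, hA, hpos A hA hA_card⟩
  rcases (P.nonempty_of_mem_parts hC).exists_eq_singleton_or_nontrivial with ⟨i, rfl⟩ | hC_nontriv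
  · exact (cellExcess_singleton H _ i).ge
  · exact (hpos C hC (one_lt_card_iff_nontrivial.2 hC_nontriv)).le

theorem stmt9_general (H : Finset α → 𝕜) :
    (∀ P : Finpartition s, 2 ≤ #P.parts → P ≠ ⊥ →
        partitionGap H (⊥ : Finpartition s) < partitionGap H P) ↔
      ∀ (B : Finset α) (hB : B ⊆ s), 1 ≤ #B → #B ≤ #s - 2 →
        partitionGap H (⊥ : Finpartition s) < partitionGap H (singletonsAndRest hB) := by
  constructor
  · intro h B hB hB_pos hB_le
    have card_rest : #(s \ B) = #s - #B := card_sdiff_of_subset hB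
    have hBs : B ⊂ s := hB.ssubset_of_ne (by rintro rfl; omega)
    exact h _ (by rw [card_parts_singletonsAndRest hBs]; omega)
      (singletonsAndRest_ne_bot hB (by omega))
  · intro h P hP_card hP
    refine partitionGap_bot_lt_of_cellExcess_pos (fun A hA hA_card => ?_) hP_card hP
    have hAs : A ⊂ s := ssubset_of_mem_parts hP_card hA
    have compl_ssubset : s \ A ⊂ s := sdiff_ssubset hAs.subset (P.nonempty_of_mem_parts hA)
    have compl_nonempty : (s \ A).Nonempty := sdiff_nonempty.2 hAs.2
    have card_compl : #(s \ A) = #s - #A := card_sdiff_of_subset hAs.subset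
    rw [← Finset.sdiff_sdiff_eq_self hAs.subset,
      ← partitionGap_bot_lt_singletonsAndRest_iff H compl_ssubset compl_nonempty]
    exact h _ compl_ssubset.subset compl_nonempty.card_pos (by omega)

end PartitionGap

section PartitionsOfFin

variable {m : ℕ} {p : Finset (Finset (Fin m)) → Prop}

theorem forall_isPartition_iff :
    (∀ P, IsPartition P → p P) ↔ ∀ Q : Finpartition (univ : Finset (Fin m)), p Q.parts := by
  constructor
  · intro h Q
    exact h _ ⟨fun A => Q.nonempty_of_mem_parts, fun i => Q.existsUnique_mem (mem_univ i)⟩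
  · rintro h P ⟨nonempty, existsUnique⟩
    exact h (.ofExistsUnique P (fun A _ => subset_univ A) (fun i _ => existsUnique i)
      fun empty_mem => not_nonempty_empty (nonempty ∅ empty_mem))

theorem sPart_eq_parts_bot : sPart m = (⊥ : Finpartition (univ : Finset (Fin m))).parts := by
  rw [Finpartition.parts_bot, map_eq_image]
  rfl

theorem partB_eq_parts_singletonsAndRest {B : Finset (Fin m)} (hB : B ≠ univ) :
    partB B = (singletonsAndRest (subset_univ B)).parts := by
  rw [parts_singletonsAndRest (ssubset_univ_iff.2 hB), Finpartition.parts_bot, map_eq_image,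
    ← compl_eq_univ_sdiff]
  rfl

theorem forall_partB_iff :
    (∀ B : Finset (Fin m), 1 ≤ #B → #B ≤ m - 2 → p (partB B)) ↔
      ∀ (B : Finset (Fin m)) (hB : B ⊆ univ), 1 ≤ #B → #B ≤ #(univ : Finset (Fin m)) - 2 →
        p (singletonsAndRest hB).parts := by
  simp only [card_fin, subset_univ, forall_true_left]
  refine forall_congr' fun B => forall₂_congr fun hB_pos hB_le => ?_
  have hB : B ≠ univ := by
    rintro rfl
    rw [card_fin] at hB_pos hB_le
    omega
  rw [partB_eq_parts_singletonsAndRest hB]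

theorem ΔP_parts {Ω : Type*} [MeasurableSpace Ω] (μ : Measure Ω) {𝒳 : Fin m → Type*}
    [∀ i, Fintype (𝒳 i)] (X : ∀ i, Ω → 𝒳 i) (P : Finpartition (univ : Finset (Fin m))) :
    ΔP μ X P.parts = partitionGap (HX μ X) P :=
  rfl

end PartitionsOfFin

/-- Proposition 1(b): `S` is the unique minimizer of `Δ` over all partitions of `[m]`
with at least two cells iff `Δ(S) < Δ(P_B)` for all `B` with `1 ≤ |B| ≤ m−2`. -/
theorem stmt9 {m : ℕ} (hm : 3 ≤ m) {Ω : Type*} [MeasurableSpace Ω] (μ : Measure Ω)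
    [IsProbabilityMeasure μ]
    {𝒳 : Fin m → Type*} [∀ i, Fintype (𝒳 i)] [∀ i, MeasurableSpace (𝒳 i)]
    [∀ i, MeasurableSingletonClass (𝒳 i)]
    (X : ∀ i, Ω → 𝒳 i) (hX : ∀ i, Measurable (X i)) :
    (∀ P : Finset (Finset (Fin m)), IsPartition P → 2 ≤ P.card → P ≠ sPart m →
        ΔP μ X (sPart m) < ΔP μ X P)
      ↔ (∀ B : Finset (Fin m), 1 ≤ B.card → B.card ≤ m - 2 →
          ΔP μ X (sPart m) < ΔP μ X (partB B)) := by
  rw [forall_isPartition_iff, forall_partB_iff (p := (ΔP μ X (sPart m) < ΔP μ X ·)),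
    sPart_eq_parts_bot]
  simpa only [ne_eq, Finpartition.ext_iff, ΔP_parts] using stmt9_general (HX μ X)
end

section
/- Let m ≥ 3 and suppose X_1,…,X_m are isentropic. Then the singleton partition S is a minimizer: Δ(S) ≤ Δ(P) for every partition P of [m] with |P| ≥ 2. (Corollary 1 of Section IV.) -/
open MeasureTheory Finset

/-!
An isentropic family has `H(X_A) = g(|A|)`, and submodularity of entropy, applied to two sets of
size `k + 1` that meet in `k` elements, makes `g` concave. So `g` lies above its chord from `1` to
`m`: with `s` the slope of that chord, `H(X_A) ≥ g(1) + (|A| - 1) s`, with equality for singletons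
and for `[m]`. Summing over the cells of a partition `P` gives `Δ(P) ≥ g(1) - s = Δ(S)`.

Submodularity of entropy reduces, one value of `X_{A ∩ B}` at a time, to an inequality between a
nonnegative array and its row and column sums. That inequality is Gibbs' inequality for the array
and the product of its margins divided by its total mass.
-/

section Concave

variable {R : Type*} [CommRing R] [LinearOrder R] [IsStrictOrderedRing R]

lemma mul_sum_range_le_mul_sum_range_of_antitoneOn {d : ℕ → R} {n a : ℕ}
    (hd : AntitoneOn d (Set.Iio n)) (ha : a ≤ n) :
    a * ∑ i ∈ range n, d i ≤ n * ∑ i ∈ range a, d i := by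
  -- Chebyshev's sum inequality for `d` and the indicator of `range a`
  have hindicator : Antitone fun i => if i < a then (1 : R) else 0 := by
    intro i j hij
    dsimp only
    split_ifs <;> first | omega | norm_num
  have hmono := (hindicator.antitoneOn (range n)).monovaryOn (by simpa using hd)
  have hfilter : {i ∈ range n | i < a} = range a := by
    ext i
    simp only [mem_filter, mem_range]
    omega
  simpa [← sum_filter, hfilter] using hmono.sum_mul_sum_le_card_mul_sum

lemma mul_sub_le_mul_sub_of_concave {g : ℕ → R} {n a : ℕ}
    (hg : ∀ k, k + 2 ≤ n → g (k + 2) + g k ≤ 2 * g (k + 1)) (ha : a ≤ n) :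
    a * (g n - g 0) ≤ n * (g a - g 0) := by
  have hd : AntitoneOn (fun k => g (k + 1) - g k) (Set.Iio n) := by
    refine antitoneOn_of_add_one_le Set.ordConnected_Iio fun k _ _ hk => ?_
    linarith [hg k hk]
  simpa only [sum_range_sub] using mul_sum_range_le_mul_sum_range_of_antitoneOn hd ha

end Concave

section SetFunction

lemma exists_eq_comp_card {α β : Type*} {f : Finset α → β}
    (hf : ∀ A B, A.Nonempty → B.Nonempty → #A = #B → f A = f B) :
    ∃ g : ℕ → β, ∀ A, A.Nonempty → f A = g #A := by
  have hfactor : Function.FactorsThrough (fun A : {A : Finset α // A.Nonempty} => f A)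
      (fun A => #A.1) := fun A B h => hf A B A.2 B.2 h
  exact ⟨_, fun A hA => (hfactor.extend_apply (fun _ => f ∅) ⟨A, hA⟩).symm⟩

/-- Submodularity of a set function on the finite subsets of `ι`, the form in which the
nonnegativity of conditional mutual information enters. -/
def IsSubmodular {ι M : Type*} [DecidableEq ι] [Add M] [LE M] (f : Finset ι → M) : Prop :=
  ∀ A B, f (A ∪ B) + f (A ∩ B) ≤ f A + f B

variable {ι : Type*} [DecidableEq ι] [Fintype ι]

section Ring

variable {R : Type*} [CommRing R] [LinearOrder R] [IsStrictOrderedRing R] {f : Finset ι → R}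

lemma IsSubmodular.concave_of_eq_comp_card (hf : IsSubmodular f) {g : ℕ → R}
    (hg : ∀ A, A.Nonempty → f A = g #A) {k : ℕ} (hk : 0 < k) (hkn : k + 2 ≤ Fintype.card ι) :
    g (k + 2) + g k ≤ 2 * g (k + 1) := by
  obtain ⟨T, -, hT⟩ := exists_subset_card_eq (s := (univ : Finset ι)) hkn
  obtain ⟨x, hx, y, hy, hxy⟩ := one_lt_card.1 (by omega : 1 < #T)
  have hunion : T.erase x ∪ T.erase y = T := by grind
  have hinter : T.erase x ∩ T.erase y = (T.erase x).erase y := by grind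
  have hcx : #(T.erase x) = k + 1 := by simp [hx, hT]
  have hcy : #(T.erase y) = k + 1 := by simp [hy, hT]
  have hcxy : #((T.erase x).erase y) = k := by simp [hx, hy, hxy.symm, hT]
  have hsub := hf (T.erase x) (T.erase y)
  rw [hunion, hinter, hg T (card_pos.1 (by omega)), hg _ (card_pos.1 (by omega)),
    hg _ (card_pos.1 (by omega)), hg _ (card_pos.1 (by omega)), hT, hcx, hcy, hcxy] at hsub
  linarith

lemma IsSubmodular.card_sub_one_mul_le (hf : IsSubmodular f)
    (hcard : ∀ A B, A.Nonempty → B.Nonempty → #A = #B → f A = f B) {A : Finset ι}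
    (hA : A.Nonempty) (i : ι) :
    (#A - 1) * (f univ - f {i}) ≤ (Fintype.card ι - 1) * (f A - f {i}) := by
  obtain ⟨g, hg⟩ := exists_eq_comp_card hcard
  obtain ⟨a, ha⟩ := Nat.exists_eq_add_one.2 hA.card_pos
  obtain ⟨n, hn⟩ := Nat.exists_eq_add_one.2 (Fintype.card_pos_iff.2 ⟨i⟩)
  have han : a ≤ n := by have := card_le_univ A; omega
  have hchord := mul_sub_le_mul_sub_of_concave (g := fun k => g (k + 1)) (n := n)
    (fun k hk => hf.concave_of_eq_comp_card hg k.succ_pos (by omega)) han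
  rw [hg A hA, hg {i} (singleton_nonempty i), hg univ ⟨i, mem_univ i⟩, card_univ, ha, hn]
  simpa using hchord

end Ring

section Field

variable {𝕜 : Type*} [Field 𝕜] {f : Finset ι → 𝕜}

/-- The functional `Δ` with an arbitrary set function `f` in place of entropy. On a one-cell
partition it is `0`, a division by zero. -/
def partitionDelta (f : Finset ι → 𝕜) (P : Finpartition (univ : Finset ι)) : 𝕜 :=
  (∑ A ∈ P.parts, f A - f univ) / (#P.parts - 1)

lemma partitionDelta_bot (hcard : ∀ A B, A.Nonempty → B.Nonempty → #A = #B → f A = f B) (i : ι) :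
    partitionDelta f ⊥ = (Fintype.card ι * f {i} - f univ) / (Fintype.card ι - 1) := by
  have hsingle (j : ι) : f {j} = f {i} :=
    hcard _ _ (singleton_nonempty j) (singleton_nonempty i) rfl
  simp [partitionDelta, Finpartition.parts_bot, hsingle]

theorem IsSubmodular.partitionDelta_bot_le [LinearOrder 𝕜] [IsStrictOrderedRing 𝕜]
    (hf : IsSubmodular f)
    (hcard : ∀ A B, A.Nonempty → B.Nonempty → #A = #B → f A = f B)
    {P : Finpartition (univ : Finset ι)} (hP : 2 ≤ #P.parts) :
    partitionDelta f ⊥ ≤ partitionDelta f P := by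
  have hPn : #P.parts ≤ Fintype.card ι := P.card_parts_le_card
  obtain ⟨i⟩ : Nonempty ι := Fintype.card_pos_iff.1 (by omega)
  have hsum : (∑ A ∈ P.parts, (#A : 𝕜)) = Fintype.card ι := mod_cast P.sum_card_parts
  have hchord : (Fintype.card ι - #P.parts) * (f univ - f {i}) ≤
      (Fintype.card ι - 1) * (∑ A ∈ P.parts, f A - #P.parts * f {i}) := by
    simpa [← sum_mul, ← mul_sum, hsum] using sum_le_sum fun A hA =>
      hf.card_sub_one_mul_le hcard (P.nonempty_of_mem_parts hA) i
  have hP' : (2 : 𝕜) ≤ #P.parts := mod_cast hP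
  have hPn' : (#P.parts : 𝕜) ≤ Fintype.card ι := mod_cast hPn
  rw [partitionDelta_bot hcard i, partitionDelta, div_le_div_iff₀ (by linarith) (by linarith)]
  linarith

end Field

end SetFunction

section Gibbs

lemma sub_le_mul_log_sub_mul_log {p q : ℝ} (hp : 0 ≤ p) (hq : 0 ≤ q) (hpq : q = 0 → p = 0) :
    p - q ≤ p * Real.log p - p * Real.log q := by
  rcases hp.eq_or_lt with rfl | hp
  · simpa using hq
  have hq : 0 < q := hq.lt_of_ne' fun h => hp.ne' (hpq h)
  have hlog : Real.log q - Real.log p ≤ q / p - 1 := by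
    rw [← Real.log_div hq.ne' hp.ne']
    exact Real.log_le_sub_one_of_pos (div_pos hq hp)
  calc p - q = -(p * (q / p - 1)) := by field_simp; ring
    _ ≤ -(p * (Real.log q - Real.log p)) := by gcongr
    _ = p * Real.log p - p * Real.log q := by ring

lemma sum_mul_log_le_sum_mul_log {ι : Type*} {s : Finset ι} {p q : ι → ℝ}
    (hp : ∀ i ∈ s, 0 ≤ p i) (hq : ∀ i ∈ s, 0 ≤ q i) (hpq : ∀ i ∈ s, q i = 0 → p i = 0)
    (hsum : ∑ i ∈ s, q i ≤ ∑ i ∈ s, p i) :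
    ∑ i ∈ s, p i * Real.log (q i) ≤ ∑ i ∈ s, p i * Real.log (p i) := by
  have := sum_le_sum fun i hi => sub_le_mul_log_sub_mul_log (hp i hi) (hq i hi) (hpq i hi)
  simp only [sum_sub_distrib] at this
  linarith

lemma mul_log_mul_div_of_le {p a b c : ℝ} (hp : 0 ≤ p) (hpa : p ≤ a) (hpb : p ≤ b) (hac : a ≤ c) :
    p * Real.log (a * b / c) = p * Real.log a + p * Real.log b - p * Real.log c := by
  rcases hp.eq_or_lt with rfl | hp
  · simp
  have ha : 0 < a := hp.trans_le hpa
  have hb : 0 < b := hp.trans_le hpb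
  rw [Real.log_div (mul_pos ha hb).ne' (ha.trans_le hac).ne', Real.log_mul ha.ne' hb.ne']
  ring

lemma sum_negMulLog_add_negMulLog_sum_le {T U : Type*} [Fintype T] [Fintype U] {p : T → U → ℝ}
    (hp : ∀ t u, 0 ≤ p t u) :
    ∑ t, ∑ u, Real.negMulLog (p t u) + Real.negMulLog (∑ t, ∑ u, p t u) ≤
      ∑ t, Real.negMulLog (∑ u, p t u) + ∑ u, Real.negMulLog (∑ t, p t u) := by
  set a : T → ℝ := fun t => ∑ u, p t u
  set b : U → ℝ := fun u => ∑ t, p t u with hb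
  set c : ℝ := ∑ t, a t
  have hbc : ∑ u, b u = c := sum_comm
  have hpa (t u) : p t u ≤ a t := single_le_sum (fun u _ => hp t u) (mem_univ u)
  have hpb (t u) : p t u ≤ b u :=
    single_le_sum (f := fun t => p t u) (fun t _ => hp t u) (mem_univ t)
  have ha0 (t) : 0 ≤ a t := sum_nonneg fun u _ => hp t u
  have hb0 (u) : 0 ≤ b u := sum_nonneg fun t _ => hp t u
  have hac (t) : a t ≤ c := single_le_sum (fun t _ => ha0 t) (mem_univ t)
  have hc0 : 0 ≤ c := sum_nonneg fun t _ => ha0 t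
  have hzero (t u) (h : a t * b u / c = 0) : p t u = 0 := by
    simp only [div_eq_zero_iff, mul_eq_zero] at h
    rcases h with (h | h) | h <;> linarith [hp t u, hpa t u, hpb t u, hac t]
  have hmass : ∑ x : T × U, a x.1 * b x.2 / c = ∑ x : T × U, p x.1 x.2 := by
    simp only [Fintype.sum_prod_type, ← sum_div, ← mul_sum, ← sum_mul, hbc]
    exact mul_self_div_self c
  have hgibbs := sum_mul_log_le_sum_mul_log (s := univ) (p := fun x : T × U => p x.1 x.2)
    (fun x _ => hp x.1 x.2) (fun x _ => div_nonneg (mul_nonneg (ha0 x.1) (hb0 x.2)) hc0)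
    (fun x _ => hzero x.1 x.2) hmass.le
  have hlog (t u) := mul_log_mul_div_of_le (hp t u) (hpa t u) (hpb t u) (hac t)
  have hcol : ∑ t, ∑ u, p t u * Real.log (b u) = ∑ u, b u * Real.log (b u) := by
    rw [sum_comm]
    simp only [← sum_mul, hb]
  simp only [Fintype.sum_prod_type, hlog, sum_add_distrib, sum_sub_distrib, hcol,
    ← sum_mul] at hgibbs
  simp only [Real.negMulLog, neg_mul, sum_neg_distrib]
  linarith

end Gibbs

section Entropy

variable {Ω : Type*} [MeasurableSpace Ω] (μ : Measure Ω)

lemma shannonEntropy_comp_of_injective {S S' : Type*} [Fintype S] [Fintype S'] {φ : S → S'}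
    (hφ : Function.Injective φ) (Y : Ω → S) :
    shannonEntropy μ (φ ∘ Y) = shannonEntropy μ Y := by
  refine (Fintype.sum_of_injective φ hφ _ _ (fun s' hs' => ?_) fun s => ?_).symm
  · have hempty : φ ∘ Y ⁻¹' {s'} = ∅ := by
      ext ω
      simpa using fun h => hs' ⟨Y ω, h⟩
    simp [hempty]
  · rw [Set.preimage_comp, ← Set.image_singleton, Set.preimage_image_eq _ hφ]

variable [IsFiniteMeasure μ]

lemma sum_measureReal_preimage_prodMk {S T : Type*} [Fintype T] [MeasurableSpace T]
    [MeasurableSingletonClass T] (Y : Ω → S) {Z : Ω → T} (hZ : Measurable Z) (s : S) :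
    ∑ t, μ.real ((fun ω => (Y ω, Z ω)) ⁻¹' {(s, t)}) = μ.real (Y ⁻¹' {s}) := by
  have hfiber (t : T) : MeasurableSet (Z ⁻¹' {t}) := hZ (measurableSet_singleton t)
  calc ∑ t, μ.real ((fun ω => (Y ω, Z ω)) ⁻¹' {(s, t)})
      = ∑ t, (μ.restrict (Y ⁻¹' {s})).real (Z ⁻¹' {t}) := by
        refine sum_congr rfl fun t _ => ?_
        rw [measureReal_restrict_apply (hfiber t), ← Set.singleton_prod_singleton,
          Set.mk_preimage_prod, Set.inter_comm]
    _ = (μ.restrict (Y ⁻¹' {s})).real Set.univ := by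
        simpa using sum_measureReal_preimage_singleton (μ := μ.restrict (Y ⁻¹' {s})) univ
          fun t _ => hfiber t
    _ = μ.real (Y ⁻¹' {s}) := measureReal_restrict_apply_univ _

lemma shannonEntropy_prodMk_prodMk_add_le {S T U : Type*} [Fintype S] [Fintype T] [Fintype U]
    [MeasurableSpace T] [MeasurableSpace U] [MeasurableSingletonClass T]
    [MeasurableSingletonClass U] (Y : Ω → S) {Z : Ω → T} {W : Ω → U}
    (hZ : Measurable Z) (hW : Measurable W) :
    shannonEntropy μ (fun ω => (Y ω, Z ω, W ω)) + shannonEntropy μ Y ≤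
      shannonEntropy μ (fun ω => (Y ω, Z ω)) + shannonEntropy μ (fun ω => (Y ω, W ω)) := by
  let p (s : S) (t : T) (u : U) : ℝ := μ.real ((fun ω => (Y ω, Z ω, W ω)) ⁻¹' {(s, t, u)})
  have hYZ (s t) : ∑ u, p s t u = μ.real ((fun ω => (Y ω, Z ω)) ⁻¹' {(s, t)}) := by
    rw [← sum_measureReal_preimage_prodMk μ _ hW]
    simp [p, Set.preimage, and_assoc]
  have hYW (s u) : ∑ t, p s t u = μ.real ((fun ω => (Y ω, W ω)) ⁻¹' {(s, u)}) := by
    rw [← sum_measureReal_preimage_prodMk μ _ hZ]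
    simp [p, Set.preimage, and_left_comm, and_comm]
  have hfiber := sum_le_sum fun s (_ : s ∈ univ) =>
    sum_negMulLog_add_negMulLog_sum_le (p := p s) fun _ _ => measureReal_nonneg
  simp only [sum_add_distrib, hYZ, hYW, sum_measureReal_preimage_prodMk μ Y hZ] at hfiber
  simpa only [shannonEntropy, ← measureReal_def, Fintype.sum_prod_type] using hfiber

theorem isSubmodular_HX {m : ℕ} {𝒳 : Fin m → Type*} [∀ i, Fintype (𝒳 i)]
    [∀ i, MeasurableSpace (𝒳 i)] [∀ i, MeasurableSingletonClass (𝒳 i)] {X : ∀ i, Ω → 𝒳 i}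
    (hX : ∀ i, Measurable (X i)) : IsSubmodular (HX μ X) := by
  intro A B
  let tuple (C : Finset (Fin m)) (ω : Ω) (i : C) : 𝒳 i := X i ω
  have hmeas (C) : Measurable (tuple C) := measurable_pi_lambda _ fun i => hX i
  have hunion : shannonEntropy μ (fun ω => (tuple (A ∩ B) ω, tuple A ω, tuple B ω)) =
      HX μ X (A ∪ B) := by
    refine shannonEntropy_comp_of_injective μ
      (φ := fun v : ∀ i : ↥(A ∪ B), 𝒳 i => (restrict₂ inter_subset_union v,
        restrict₂ subset_union_left v, restrict₂ subset_union_right v)) ?_ (tuple (A ∪ B))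
    intro v w hvw
    simp only [Prod.mk.injEq, funext_iff] at hvw
    ext ⟨i, hi⟩
    rcases mem_union.1 hi with h | h
    exacts [hvw.2.1 ⟨i, h⟩, hvw.2.2 ⟨i, h⟩]
  have hsuperset {C} (hC : A ∩ B ⊆ C) :
      shannonEntropy μ (fun ω => (tuple (A ∩ B) ω, tuple C ω)) = HX μ X C :=
    shannonEntropy_comp_of_injective μ
      (φ := fun v : ∀ i : C, 𝒳 i => (restrict₂ hC v, v))
      (fun _ _ h => congrArg Prod.snd h) (tuple C)
  rw [← hunion, ← hsuperset inter_subset_left, ← hsuperset inter_subset_right]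
  exact shannonEntropy_prodMk_prodMk_add_le μ (tuple (A ∩ B)) (hmeas A) (hmeas B)

end Entropy

lemma IsPartition.exists_finpartition_parts_eq {m : ℕ} {P : Finset (Finset (Fin m))}
    (hP : IsPartition P) : ∃ Q : Finpartition (univ : Finset (Fin m)), Q.parts = P :=
  ⟨.ofExistsUnique P (fun A _ => subset_univ A) (fun i _ => hP.2 i)
    fun h => not_nonempty_empty (hP.1 ∅ h), rfl⟩

lemma ΔP_parts_eq_partitionDelta {m : ℕ} {Ω : Type*} [MeasurableSpace Ω] (μ : Measure Ω)
    {𝒳 : Fin m → Type*} [∀ i, Fintype (𝒳 i)] (X : ∀ i, Ω → 𝒳 i)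
    (Q : Finpartition (univ : Finset (Fin m))) :
    ΔP μ X Q.parts = partitionDelta (HX μ X) Q :=
  one_div_mul_eq_div _ _

lemma parts_bot_eq_sPart (m : ℕ) : (⊥ : Finpartition (univ : Finset (Fin m))).parts = sPart m :=
  map_eq_image _ _

theorem stmt11_general {m : ℕ} {Ω : Type*} [MeasurableSpace Ω] (μ : Measure Ω)
    [IsFiniteMeasure μ] {𝒳 : Fin m → Type*} [∀ i, Fintype (𝒳 i)] [∀ i, MeasurableSpace (𝒳 i)]
    [∀ i, MeasurableSingletonClass (𝒳 i)]
    (X : ∀ i, Ω → 𝒳 i) (hX : ∀ i, Measurable (X i))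
    (hiso : ∀ A B : Finset (Fin m), A.Nonempty → B.Nonempty → A.card = B.card →
        HX μ X A = HX μ X B) :
    ∀ P : Finset (Finset (Fin m)), IsPartition P → 2 ≤ P.card →
      ΔP μ X (sPart m) ≤ ΔP μ X P := by
  intro P hP hcard
  obtain ⟨Q, rfl⟩ := hP.exists_finpartition_parts_eq
  simp only [← parts_bot_eq_sPart, ΔP_parts_eq_partitionDelta]
  exact (isSubmodular_HX μ hX).partitionDelta_bot_le hiso hcard

/-- Corollary 1 of Section IV: if `X_1,…,X_m` are isentropic, then the singleton
partition is a minimizer of `Δ`. -/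
theorem stmt11 {m : ℕ} (hm : 3 ≤ m) {Ω : Type*} [MeasurableSpace Ω] (μ : Measure Ω)
    [IsProbabilityMeasure μ]
    {𝒳 : Fin m → Type*} [∀ i, Fintype (𝒳 i)] [∀ i, MeasurableSpace (𝒳 i)]
    [∀ i, MeasurableSingletonClass (𝒳 i)]
    (X : ∀ i, Ω → 𝒳 i) (hX : ∀ i, Measurable (X i))
    (hiso : ∀ A B : Finset (Fin m), A.Nonempty → B.Nonempty → A.card = B.card →
        HX μ X A = HX μ X B) :
    ∀ P : Finset (Finset (Fin m)), IsPartition P → 2 ≤ P.card →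
      ΔP μ X (sPart m) ≤ ΔP μ X P :=
  stmt11_general μ X hX hiso
end
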